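/- arXiv:1203.5323 — 2 statements merged into one kernel-verified Lean document; each statement's English description precedes it below -/
import Mathlib

section
/- Let Θ'_{m,k} be the 3-CNF obtained from Θ_{m,k} by the standard nondeterministic extension (replacing each clause v^1_i∨⋯∨v^m_i by the clauses (v^1_i∨v^2_i∨¬z^1_i), (z^1_i∨v^3_i∨¬z^2_i), …, (z^{m-4}_i∨v^{m-2}_i∨¬z^{m-3}_i), (z^{m-3}_i∨v^{m-1}_i∨v^m_i) with new variables z^1_i,…,z^{m-3}_i). Then (Θ'_{m,k}, k) admits a W[1]-parameterized tree-Resolution refutation of size at most 7^{k+1}. -/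
/-- A clause is a finite set of literals; a literal is a pair (variable, polarity). -/
abbrev Clause (V : Type) := Finset (V × Bool)

/-- An assignment satisfies a clause if it makes some literal of the clause true. -/
def satClause {V : Type} (α : V → Bool) (C : Clause V) : Prop :=
  ∃ l ∈ C, α l.1 = l.2

/-- An assignment satisfies a CNF (a set of clauses) if it satisfies every clause. -/
def satCNF {V : Type} (α : V → Bool) (F : Set (Clause V)) : Prop :=
  ∀ C ∈ F, satClause α C

/-- A Resolution refutation of a set `F` of clauses: a finite sequence of clauses ending in
the empty clause, each clause being an axiom of `F`, a resolvent of two earlier clauses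
(from `P ∨ x` and `Q ∨ ¬x` derive `P ∨ Q`), or a weakening of an earlier clause
(from `P` derive `P ∨ l`). Its size is the length of the sequence. -/
structure ResRefutation {V : Type} [DecidableEq V] (F : Set (Clause V)) where
  seq : List (Clause V)
  ne : seq ≠ []
  lastEmpty : seq.getLast ne = (∅ : Clause V)
  valid : ∀ i (hi : i < seq.length),
    (seq[i]'hi ∈ F) ∨
    (∃ (j l : ℕ) (hj : j < i) (hl : l < i) (x : V) (P Q : Clause V),
      seq[j]'(hj.trans hi) = insert (x, true) P ∧
      seq[l]'(hl.trans hi) = insert (x, false) Q ∧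
      seq[i]'hi = P ∪ Q) ∨
    (∃ (j : ℕ) (hj : j < i) (lit : V × Bool),
      seq[i]'hi = insert lit (seq[j]'(hj.trans hi)))

/-- The size of a Resolution refutation: the length of its sequence of clauses. -/
def ResRefutation.size {V : Type} [DecidableEq V] {F : Set (Clause V)}
    (π : ResRefutation F) : ℕ :=
  π.seq.length

/-- Tree-Resolution derivations from the clause set `F`: each clause occurrence is used as a
premise of at most one inference. A tree-Resolution refutation of `F` is a `ResTree F ∅`. -/
inductive ResTree {V : Type} [DecidableEq V] (F : Set (Clause V)) : Clause V → Type where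
  | ax (C : Clause V) (h : C ∈ F) : ResTree F C
  | res (x : V) (P Q : Clause V) (t₁ : ResTree F (insert (x, true) P))
      (t₂ : ResTree F (insert (x, false) Q)) : ResTree F (P ∪ Q)
  | weak (l : V × Bool) (C : Clause V) (t : ResTree F C) : ResTree F (insert l C)

/-- The size of a tree-Resolution derivation: its number of clause occurrences. -/
def ResTree.size {V : Type} [DecidableEq V] {F : Set (Clause V)} :
    ∀ {C : Clause V}, ResTree F C → ℕ
  | _, .ax _ _ => 1
  | _, .res _ _ _ t₁ t₂ => t₁.size + t₂.size + 1
  | _, .weak _ _ t => t.size + 1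

/-- The clauses `¬x_{i₁} ∨ ⋯ ∨ ¬x_{i_{k+1}}` over the variables in `Vars`. -/
def negClausesOn {V : Type} [DecidableEq V] (Vars : Finset V) (k : ℕ) : Set (Clause V) :=
  {C | ∃ S : Finset V, S ⊆ Vars ∧ S.card = k + 1 ∧ C = S.image (fun v => (v, false))}

/-- The clauses `x_{i₁} ∨ ⋯ ∨ x_{i_{n-k+1}}` over the `n` variables in `Vars`. -/
def posClausesOn {V : Type} [DecidableEq V] (Vars : Finset V) (k : ℕ) : Set (Clause V) :=
  {C | ∃ S : Finset V, S ⊆ Vars ∧ S.card = Vars.card - k + 1 ∧ C = S.image (fun v => (v, true))}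

/-- The weight of an assignment: the number of the `n` variables set to true. -/
def weight (n : ℕ) (α : ℕ → Bool) : ℕ :=
  ((Finset.range n).filter (fun i => α i = true)).card
/-- `Θ_{m,k}`: the CNF in the `n = m(k+1)` variables `v^j_i = m*i + j` (`i < k+1`, `j < m`),
with the `k+1` clauses `v^1_i ∨ ⋯ ∨ v^m_i`. -/
def Theta (m k : ℕ) : Set (Clause ℕ) :=
  {C | ∃ i, i < k + 1 ∧ C = (Finset.range m).image (fun j => (m * i + j, true))}

/-- `Γ_Θ`: the `m^{k+1}` clauses `¬v^{a_1}_1 ∨ ⋯ ∨ ¬v^{a_{k+1}}_{k+1}` with `a_i ∈ [m]`. -/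
def GammaTheta (m k : ℕ) : Set (Clause ℕ) :=
  {C | ∃ a : ℕ → ℕ, (∀ i, i < k + 1 → a i < m) ∧
    C = (Finset.range (k + 1)).image (fun i => (m * i + a i, false))}

/-- `Ψ_{n,k}` (for `n` even): the CNF in variables `v_0, …, v_{n-1}` with clauses
`v_{2i} ∨ ¬v_{2i+1}` and `v_{2i+1} ∨ ¬v_{2i}` (i.e. `v_{2i} ↔ v_{2i+1}`). -/
def Psi (n : ℕ) : Set (Clause ℕ) :=
  {C | ∃ i, 2 * i + 1 < n ∧
    (C = {(2 * i, true), (2 * i + 1, false)} ∨ C = {(2 * i + 1, true), (2 * i, false)})}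

/-- `Γ_Ψ` (for `k` odd): the `binom(n/2, (k+1)/2)` clauses
`¬v_{2a_1} ∨ ¬v_{2a_1+1} ∨ ⋯ ∨ ¬v_{2a_{(k+1)/2}} ∨ ¬v_{2a_{(k+1)/2}+1}` over sets `A` of
`(k+1)/2` pairs. -/
def GammaPsi (n k : ℕ) : Set (Clause ℕ) :=
  {C | ∃ A : Finset ℕ, A ⊆ Finset.range (n / 2) ∧ A.card = (k + 1) / 2 ∧
    C = (A.biUnion (fun a => ({2 * a, 2 * a + 1} : Finset ℕ))).image (fun v => (v, false))}

/-- The variable `v^j_i` of `Θ'_{m,k}` (as for `Θ_{m,k}`, encoded as `m*i + j`). -/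
def vvar (m i j : ℕ) : ℕ ⊕ ℕ := Sum.inl (m * i + j)

/-- The extension variable `z^t_i` of `Θ'_{m,k}` (`i < k+1`, `t < m-3`). -/
def zvar (m i t : ℕ) : ℕ ⊕ ℕ := Sum.inr (m * i + t)

/-- `Θ'_{m,k}` (for `m ≥ 3`): the 3-CNF obtained from `Θ_{m,k}` by the standard
nondeterministic extension, replacing each clause `v^1_i ∨ ⋯ ∨ v^m_i` by the clauses
`(v^1_i ∨ v^2_i ∨ ¬z^1_i)`, `(z^1_i ∨ v^3_i ∨ ¬z^2_i)`, …,
`(z^{m-4}_i ∨ v^{m-2}_i ∨ ¬z^{m-3}_i)`, `(z^{m-3}_i ∨ v^{m-1}_i ∨ v^m_i)`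
with new variables `z^1_i, …, z^{m-3}_i` (indices here are 0-based; for each `i` there
are `m-2` clauses indexed by `t < m-2`). -/
def ThetaPrime (m k : ℕ) : Set (Clause (ℕ ⊕ ℕ)) :=
  {C | ∃ i t, i < k + 1 ∧ t < m - 2 ∧
    C = (if t = 0 then ({(vvar m i 0, true), (vvar m i 1, true)} : Clause (ℕ ⊕ ℕ))
           else {(zvar m i (t - 1), true), (vvar m i (t + 1), true)}) ∪
        (if t = m - 3 then ({(vvar m i (m - 1), true)} : Clause (ℕ ⊕ ℕ))
           else {(zvar m i t, false)})}

/-- The variables of `Θ'_{m,k}`: the `m(k+1)` variables `v^j_i` and the `(m-3)(k+1)`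
extension variables `z^t_i`. -/
def thetaPrimeVars (m k : ℕ) : Finset (ℕ ⊕ ℕ) :=
  ((Finset.range (m * (k + 1))).image Sum.inl) ∪
  (((Finset.range (k + 1)) ×ˢ (Finset.range (m - 3))).image (fun p => Sum.inr (m * p.1 + p.2)))

/-!
The last clause of the extension of each block, `z^{m-3}_i ∨ v^{m-1}_i ∨ v^m_i`, consists of three
positive literals, and these `k + 1` clauses have pairwise disjoint variables. A branching procedure
that goes through the blocks and, in each, picks a variable of this clause that is true ends after
`k + 1` rounds with `k + 1` distinct true variables, contradicting a clause
`¬x_{i₁} ∨ ⋯ ∨ ¬x_{i_{k+1}}`. Read backwards, each round resolves the 3-clause with the three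
derivations for its variables: from derivations of size `n` this yields one of size
`1 + 3 * (n + 1) ≤ 7 * n`.
-/

/-- `F` tree-derives a subclause of `C` in size at most `n`. Passing to a subclause makes weakening
free; for `C = ∅` this says that `F` has a tree-Resolution refutation of size at most `n`. -/
def TreeDerivable {V : Type} [DecidableEq V] (F : Set (Clause V)) (C : Clause V) (n : ℕ) : Prop :=
  ∃ D ⊆ C, ∃ t : ResTree F D, t.size ≤ n

namespace TreeDerivable

variable {V : Type} [DecidableEq V] {F : Set (Clause V)} {C D : Clause V} {n n' : ℕ}

theorem of_mem (h : C ∈ F) : TreeDerivable F C 1 :=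
  ⟨C, subset_rfl, .ax C h, le_rfl⟩

theorem mono (h : TreeDerivable F C n) (hC : C ⊆ D) (hn : n ≤ n') : TreeDerivable F D n' := by
  obtain ⟨E, hE, t, ht⟩ := h
  exact ⟨E, hE.trans hC, t, ht.trans hn⟩

theorem exists_refutation (h : TreeDerivable F ∅ n) : ∃ t : ResTree F ∅, t.size ≤ n := by
  obtain ⟨D, hD, t, ht⟩ := h
  obtain rfl := Finset.subset_empty.1 hD
  exact ⟨t, ht⟩

theorem resolve {x : V} (hpos : TreeDerivable F (insert (x, true) C) n)
    (hneg : TreeDerivable F (insert (x, false) C) n') : TreeDerivable F C (n + n' + 1) := by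
  obtain ⟨D, hD, t, ht⟩ := hpos
  obtain ⟨E, hE, u, hu⟩ := hneg
  by_cases hxD : (x, true) ∈ D
  · by_cases hxE : (x, false) ∈ E
    · obtain ⟨P, hxP, rfl⟩ : ∃ P, (x, true) ∉ P ∧ insert (x, true) P = D :=
        ⟨D.erase (x, true), Finset.notMem_erase _ _, Finset.insert_erase hxD⟩
      obtain ⟨Q, hxQ, rfl⟩ : ∃ Q, (x, false) ∉ Q ∧ insert (x, false) Q = E :=
        ⟨E.erase (x, false), Finset.notMem_erase _ _, Finset.insert_erase hxE⟩
      have hPQ : P ∪ Q ⊆ C := Finset.union_subset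
        ((Finset.insert_subset_insert_iff hxP).1 hD) ((Finset.insert_subset_insert_iff hxQ).1 hE)
      exact ⟨P ∪ Q, hPQ, .res x P Q t u, by simp only [ResTree.size]; lia⟩
    · exact ⟨E, (Finset.subset_insert_iff_of_notMem hxE).1 hE, u, by lia⟩
  · exact ⟨D, (Finset.subset_insert_iff_of_notMem hxD).1 hD, t, by lia⟩

theorem branch {P : Finset V} (hP : TreeDerivable F (P.image (·, true) ∪ C) n)
    (hC : ∀ x ∈ P, TreeDerivable F (insert (x, false) C) n') :
    TreeDerivable F C (n + P.card * (n' + 1)) := by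
  induction P using Finset.induction_on generalizing n with
  | empty => simpa using hP
  | insert x P hx ih =>
    rw [Finset.image_insert, Finset.insert_union] at hP
    rw [Finset.forall_mem_insert] at hC
    have hx' : TreeDerivable F (insert (x, false) (P.image (·, true) ∪ C)) n' :=
      hC.1.mono (Finset.insert_subset_insert _ Finset.subset_union_right) le_rfl
    refine (ih (hP.resolve hx') hC.2).mono subset_rfl ?_
    rw [Finset.card_insert_of_notMem hx]
    lia

theorem branch_of_mem {P : Finset V} {d : ℕ} (hP : P.image (·, true) ∈ F) (hd : P.card ≤ d)
    (hn : 0 < n) (hC : ∀ x ∈ P, TreeDerivable F (insert (x, false) C) n) :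
    TreeDerivable F C ((2 * d + 1) * n) := by
  refine (((of_mem hP).mono Finset.subset_union_left le_rfl).branch hC).mono subset_rfl ?_
  calc 1 + P.card * (n + 1) ≤ n + d * (n + n) := by gcongr <;> lia
    _ = (2 * d + 1) * n := by ring

theorem of_pairwiseDisjoint {ι : Type*} {P : ι → Finset V} {I : Finset ι} {Vars S : Finset V}
    {k d : ℕ} (hneg : negClausesOn Vars k ⊆ F) (hPF : ∀ i ∈ I, (P i).image (·, true) ∈ F)
    (hPV : ∀ i ∈ I, P i ⊆ Vars) (hPd : ∀ i ∈ I, (P i).card ≤ d)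
    (hdisj : (I : Set ι).PairwiseDisjoint P) (hSV : S ⊆ Vars) (hSP : ∀ i ∈ I, Disjoint S (P i))
    (hcard : S.card + I.card = k + 1) :
    TreeDerivable F (S.image (·, false)) ((2 * d + 1) ^ I.card) := by
  classical
  induction I using Finset.induction_on generalizing S with
  | empty => exact of_mem (hneg ⟨S, hSV, by simpa using hcard, rfl⟩)
  | insert i I hi ih =>
    simp only [Finset.forall_mem_insert] at hPF hPV hPd hSP
    rw [Finset.coe_insert, Set.pairwiseDisjoint_insert_of_notMem (by simpa using hi)] at hdisj
    rw [Finset.card_insert_of_notMem hi] at hcard ⊢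
    rw [pow_succ']
    refine branch_of_mem hPF.1 hPd.1 (by positivity) fun x hx => ?_
    have hxS : x ∉ S := Finset.disjoint_right.1 hSP.1 hx
    rw [← Finset.image_insert (·, false)]
    refine ih hPF.2 hPV.2 hPd.2 hdisj.1 (Finset.insert_subset (hPV.1 hx) hSV) (fun j hj => ?_) ?_
    · exact Finset.disjoint_insert_left.2
        ⟨Finset.disjoint_left.1 (hdisj.2 j hj) hx, hSP.2 j hj⟩
    · rw [Finset.card_insert_of_notMem hxS]
      lia

end TreeDerivable

section LastClause

variable {m k i j : ℕ}

theorem vvar_mem_thetaPrimeVars (hi : i < k + 1) (hj : j < m) :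
    vvar m i j ∈ thetaPrimeVars m k := by
  have hlt : m * i + j < m * (k + 1) :=
    calc m * i + j < m * (i + 1) := by lia
      _ ≤ m * (k + 1) := Nat.mul_le_mul_left m hi
  exact Finset.mem_union_left _ (Finset.mem_image_of_mem _ (Finset.mem_range.2 hlt))

theorem zvar_mem_thetaPrimeVars (hi : i < k + 1) (hj : j < m - 3) :
    zvar m i j ∈ thetaPrimeVars m k :=
  Finset.mem_union_right _ (Finset.mem_image.2 ⟨(i, j), by simp [hj, Nat.le_of_lt_succ hi], rfl⟩)

/-- The index `i` of the block containing a variable `v^j_i` or `z^t_i` of `Θ'_{m,k}`. -/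
def blockIndex (m : ℕ) : ℕ ⊕ ℕ → ℕ :=
  Sum.elim (· / m) (· / m)

theorem blockIndex_vvar (hj : j < m) : blockIndex m (vvar m i j) = i := by
  simp [blockIndex, vvar, Nat.mul_add_div (Nat.zero_lt_of_lt hj), Nat.div_eq_of_lt hj]

theorem blockIndex_zvar (hj : j < m) : blockIndex m (zvar m i j) = i := by
  simp [blockIndex, zvar, Nat.mul_add_div (Nat.zero_lt_of_lt hj), Nat.div_eq_of_lt hj]

/-- The variables of the last clause of block `i` of `Θ'_{m,k}`. For `m = 3` there are no extension
variables, and the only clause of the block is `v^1_i ∨ v^2_i ∨ v^3_i`. -/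
def lastClauseVars (m i : ℕ) : Finset (ℕ ⊕ ℕ) :=
  {if m = 3 then vvar m i 0 else zvar m i (m - 4), vvar m i (m - 2), vvar m i (m - 1)}

theorem image_lastClauseVars_mem_thetaPrime (hm : 3 ≤ m) (hi : i < k + 1) :
    (lastClauseVars m i).image (·, true) ∈ ThetaPrime m k := by
  refine ⟨i, m - 3, hi, by lia, ?_⟩
  obtain rfl | hm := hm.eq_or_lt
  · simp [lastClauseVars]
  · have h_ne : m - 3 ≠ 0 := by lia
    have h_pred : m - 3 - 1 = m - 4 := rfl
    have h_succ : m - 3 + 1 = m - 2 := by lia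
    simp only [lastClauseVars, hm.ne', h_ne, h_pred, h_succ, if_true, if_false,
      Finset.image_insert, Finset.image_singleton, Finset.insert_union, Finset.singleton_union]

theorem card_lastClauseVars_le : (lastClauseVars m i).card ≤ 3 :=
  Finset.card_le_three

theorem lastClauseVars_subset (hm : 3 ≤ m) (hi : i < k + 1) :
    lastClauseVars m i ⊆ thetaPrimeVars m k := by
  simp only [lastClauseVars, Finset.insert_subset_iff, Finset.singleton_subset_iff]
  refine ⟨?_, vvar_mem_thetaPrimeVars hi (by lia), vvar_mem_thetaPrimeVars hi (by lia)⟩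
  split_ifs
  · exact vvar_mem_thetaPrimeVars hi (by lia)
  · exact zvar_mem_thetaPrimeVars hi (by lia)

theorem blockIndex_of_mem_lastClauseVars (hm : 3 ≤ m) {x : ℕ ⊕ ℕ} (hx : x ∈ lastClauseVars m i) :
    blockIndex m x = i := by
  simp only [lastClauseVars, Finset.mem_insert, Finset.mem_singleton] at hx
  obtain rfl | rfl | rfl := hx
  · split_ifs
    · exact blockIndex_vvar (by lia)
    · exact blockIndex_zvar (by lia)
  · exact blockIndex_vvar (by lia)
  · exact blockIndex_vvar (by lia)

theorem pairwise_disjoint_lastClauseVars (hm : 3 ≤ m) :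
    Pairwise (Function.onFun Disjoint (lastClauseVars m)) := fun _ _ hij =>
  Finset.disjoint_left.2 fun _ hxi hxj => hij <|
    (blockIndex_of_mem_lastClauseVars hm hxi).symm.trans (blockIndex_of_mem_lastClauseVars hm hxj)

end LastClause

theorem thetaPrime_W1_tree_upper_bound_general (m k : ℕ) (hm : 3 ≤ m) {F : Set (Clause (ℕ ⊕ ℕ))}
    (hF : ThetaPrime m k ∪ negClausesOn (thetaPrimeVars m k) k ⊆ F) :
    ∃ t : ResTree F (∅ : Clause (ℕ ⊕ ℕ)), t.size ≤ 7 ^ (k + 1) := by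
  obtain ⟨htheta, hneg⟩ := Set.union_subset_iff.1 hF
  have hderiv : TreeDerivable F ((∅ : Finset (ℕ ⊕ ℕ)).image (·, false))
      ((2 * 3 + 1) ^ (Finset.range (k + 1)).card) :=
    .of_pairwiseDisjoint (P := lastClauseVars m) hneg
      (fun i hi => htheta (image_lastClauseVars_mem_thetaPrime hm (Finset.mem_range.1 hi)))
      (fun i hi => lastClauseVars_subset hm (Finset.mem_range.1 hi))
      (fun _ _ => card_lastClauseVars_le)
      ((pairwise_disjoint_lastClauseVars hm).set_pairwise _)
      (Finset.empty_subset _) (fun _ _ => Finset.disjoint_empty_left _) (by simp)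
  simpa using hderiv.exists_refutation

/-- `(Θ'_{m,k}, k)` admits a `W[1]`-parameterized tree-Resolution
refutation — i.e. a tree-Resolution refutation of `Θ'_{m,k}` together with all clauses
`¬x_{i₁} ∨ ⋯ ∨ ¬x_{i_{k+1}}` and all clauses `x_{i₁} ∨ ⋯ ∨ x_{i_{n'-k+1}}` over its `n'`
variables — of size at most `7^(k+1)`. -/
theorem thetaPrime_W1_tree_upper_bound (m k : ℕ) (hm : 3 ≤ m) :
    ∃ t : ResTree (ThetaPrime m k ∪ negClausesOn (thetaPrimeVars m k) k ∪
        posClausesOn (thetaPrimeVars m k) k) (∅ : Clause (ℕ ⊕ ℕ)),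
      t.size ≤ 7 ^ (k + 1) :=
  thetaPrime_W1_tree_upper_bound_general m k hm Set.subset_union_left
end

section
/- Consider the substitution that maps each literal of Ψ'_{n,k} as follows: x_i ↦ ¬c_2 (and ¬x_i ↦ c_2), r_{x_i,j} ↦ p_{i,j}, and s_{x_i,j} ↦ q_{i,j}. Every clause of Ψ'_{n,k}, after this substitution, either is a clause of P_{n,k} or is derivable from clauses of P_{n,k} by a single resolution step (a resolution with the clause c_1 ∨ c_2), possibly followed by weakenings. Consequently, if Ψ'_{n,k} has a Resolution refutation of size S, then P_{n,k} has a Resolution refutation of size at most S plus a number of steps linear in the number of clauses of Ψ'_{n,k}. -/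
/-- Variables of the embedded CNF: original variables `x_i`, pigeonhole variables
`r_{x_i,j}` and `s_{x_i,j}`. -/
abbrev EV : Type := ℕ ⊕ (ℕ × ℕ ⊕ ℕ × ℕ)

def xvar (i : ℕ) : EV := Sum.inl i
def rvar (i j : ℕ) : EV := Sum.inr (Sum.inl (i, j))
def svar (i j : ℕ) : EV := Sum.inr (Sum.inr (i, j))

/-- The embedded CNF `Φ'` of `(Φ, k)` (for `Φ` a CNF in the variables `x_0, …, x_{n-1}`):
`Φ` together with the pigeonhole clauses
`¬x_i ∨ r_{x_i,1} ∨ ⋯ ∨ r_{x_i,k}`, `¬x_i ∨ ¬r_{x_i,j} ∨ ¬r_{x_l,j}` (`i ≠ l`, `j < k`),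
`x_i ∨ s_{x_i,1} ∨ ⋯ ∨ s_{x_i,n-k}`, and `x_i ∨ ¬s_{x_i,j} ∨ ¬s_{x_l,j}` (`i ≠ l`, `j < n-k`). -/
def EmbeddedCNF (Φ : Set (Clause ℕ)) (n k : ℕ) : Set (Clause EV) :=
  {C | ∃ D ∈ Φ, C = D.image (fun l => (xvar l.1, l.2))} ∪
  {C | ∃ i, i < n ∧
    C = insert (xvar i, false) ((Finset.range k).image (fun j => (rvar i j, true)))} ∪
  {C | ∃ i l j, i < n ∧ l < n ∧ i ≠ l ∧ j < k ∧
    C = {(xvar i, false), (rvar i j, false), (rvar l j, false)}} ∪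
  {C | ∃ i, i < n ∧
    C = insert (xvar i, true) ((Finset.range (n - k)).image (fun j => (svar i j, true)))} ∪
  {C | ∃ i l j, i < n ∧ l < n ∧ i ≠ l ∧ j < n - k ∧
    C = {(xvar i, true), (svar i j, false), (svar l j, false)}}
/-- Variables of the CNF `P_{n,k}`: `c_1`, `c_2`, `p_{i,j}` and `q_{i,j}`. -/
abbrev PV : Type := Bool ⊕ (ℕ × ℕ ⊕ ℕ × ℕ)

def c1var : PV := Sum.inl true
def c2var : PV := Sum.inl false
def pvar (i j : ℕ) : PV := Sum.inr (Sum.inl (i, j))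
def qvar (i j : ℕ) : PV := Sum.inr (Sum.inr (i, j))

/-- The CNF `P_{n,k}`, with clauses `¬c_1 ∨ ¬c_2`, `c_1 ∨ c_2` (expressing `¬c_1 ↔ c_2`),
`¬c_1 ∨ ¬p_{i,j} ∨ ¬p_{l,j}` (`i ≠ l ∈ [n]`, `j ∈ [k]`), `¬c_1 ∨ p_{i,1} ∨ ⋯ ∨ p_{i,k}`,
`¬c_2 ∨ ¬q_{i,j} ∨ ¬q_{l,j}` (`i ≠ l ∈ [n]`, `j ∈ [n-k]`), and
`¬c_2 ∨ q_{i,1} ∨ ⋯ ∨ q_{i,n-k}`. -/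
def Pnk (n k : ℕ) : Set (Clause PV) :=
  {({(c1var, false), (c2var, false)} : Clause PV), ({(c1var, true), (c2var, true)} : Clause PV)} ∪
  {C | ∃ i l j, i < n ∧ l < n ∧ i ≠ l ∧ j < k ∧
    C = {(c1var, false), (pvar i j, false), (pvar l j, false)}} ∪
  {C | ∃ i, i < n ∧
    C = insert (c1var, false) ((Finset.range k).image (fun j => (pvar i j, true)))} ∪
  {C | ∃ i l j, i < n ∧ l < n ∧ i ≠ l ∧ j < n - k ∧
    C = {(c2var, false), (qvar i j, false), (qvar l j, false)}} ∪
  {C | ∃ i, i < n ∧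
    C = insert (c2var, false) ((Finset.range (n - k)).image (fun j => (qvar i j, true)))}

/-- `PHP_{m,n}`: the negation of the pigeonhole principle from `m` pigeons to `n` holes,
in variables `p_{i,j}` (`i ∈ [m]`, `j ∈ [n]`), with clauses `¬p_{i,j} ∨ ¬p_{l,j}` and
`p_{i,1} ∨ ⋯ ∨ p_{i,n}`. -/
def PHP (m n : ℕ) : Set (Clause (ℕ × ℕ)) :=
  {C | ∃ i l j, i < m ∧ l < m ∧ i ≠ l ∧ j < n ∧ C = {((i, j), false), ((l, j), false)}} ∪
  {C | ∃ i, i < m ∧ C = (Finset.range n).image (fun j => ((i, j), true))}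

/-- The substitution on literals of `Ψ'_{n,k}`: `x_i ↦ ¬c_2` (so `¬x_i ↦ c_2`),
`r_{x_i,j} ↦ p_{i,j}`, and `s_{x_i,j} ↦ q_{i,j}`. -/
def subLit : EV × Bool → PV × Bool
  | (Sum.inl _, b) => (c2var, !b)
  | (Sum.inr (Sum.inl (i, j)), b) => (pvar i j, b)
  | (Sum.inr (Sum.inr (i, j)), b) => (qvar i j, b)

/-- The substitution applied to a clause. -/
def subClause (C : Clause EV) : Clause PV := C.image subLit

/-!
A literal substitution that respects negation maps Resolution inferences to Resolution inferences,
so a refutation is carried over line by line once its substituted axioms have been derived. Under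
`x_i ↦ ¬c_2` the positive pigeonhole clauses of an embedded CNF become axioms of `P_{n,k}`, the
negative ones become axioms with `¬c_1` replaced by `c_2`, and a clause of `Φ` with literals of both
signs collapses to `c_2 ∨ ¬c_2`; the last two kinds are resolvents of `c_1 ∨ c_2` with an axiom.
-/

section Resolution

variable {V W : Type}

/-- The negation of a literal. -/
def litNeg (l : V × Bool) : V × Bool := (l.1, !l.2)

variable [DecidableEq V] [DecidableEq W]

/-- `IsResStep F L C` means that `C` may follow the lines `L` in a Resolution derivation
from `F`: it is an axiom, a resolvent of two lines, or a one-literal weakening of a line. -/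
inductive IsResStep (F : Set (Clause V)) (L : List (Clause V)) : Clause V → Prop
  | ax {C : Clause V} (hC : C ∈ F) : IsResStep F L C
  | resolve (x : V) {P Q : Clause V} (hP : insert (x, true) P ∈ L)
      (hQ : insert (x, false) Q ∈ L) : IsResStep F L (P ∪ Q)
  | weaken (l : V × Bool) {D : Clause V} (hD : D ∈ L) : IsResStep F L (insert l D)

/-- A Resolution derivation from `F`, as the list of its lines. Lines are added at the end, so that
induction on derivations is induction on their prefixes. -/
inductive IsDerivation (F : Set (Clause V)) : List (Clause V) → Prop
  | nil : IsDerivation F []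
  | snoc {L : List (Clause V)} {C : Clause V} (hL : IsDerivation F L) (hC : IsResStep F L C) :
      IsDerivation F (L ++ [C])

variable {F : Set (Clause V)} {G : Set (Clause W)} {L M : List (Clause V)}

theorem IsResStep.mono {C : Clause V} (h : IsResStep F L C) (hLM : L ⊆ M) : IsResStep F M C := by
  cases h with
  | ax hC => exact .ax hC
  | resolve x hP hQ => exact .resolve x (hLM hP) (hLM hQ)
  | weaken l hD => exact .weaken l (hLM hD)

theorem IsResStep.of_mem_of_nonempty {C : Clause V} (hC : C ∈ L) (hne : C.Nonempty) :
    IsResStep F L C := by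
  obtain ⟨l, hl⟩ := hne
  simpa only [Finset.insert_eq_of_mem hl] using IsResStep.weaken (F := F) l hC

theorem IsResStep.resolve_litNeg {l : V × Bool} {P Q : Clause V} (hP : insert l P ∈ L)
    (hQ : insert (litNeg l) Q ∈ L) : IsResStep F L (P ∪ Q) := by
  obtain ⟨x, _ | _⟩ := l
  · exact Finset.union_comm Q P ▸ .resolve x hQ hP
  · exact .resolve x hP hQ

theorem IsDerivation.append (hL : IsDerivation F L) (hM : IsDerivation F M) :
    IsDerivation F (L ++ M) := by
  induction hM with
  | nil => rwa [List.append_nil]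
  | snoc _ hC ih =>
    rw [← List.append_assoc]
    exact ih.snoc (hC.mono (List.subset_append_right _ _))

theorem isDerivation_singleton {C : Clause V} (hC : C ∈ F) : IsDerivation F [C] :=
  IsDerivation.nil.snoc (.ax hC)

theorem isDerivation_resolvent {l : V × Bool} {P Q : Clause V} (hP : insert l P ∈ F)
    (hQ : insert (litNeg l) Q ∈ F) :
    IsDerivation F [insert l P, insert (litNeg l) Q, P ∪ Q] :=
  ((isDerivation_singleton hP).append (isDerivation_singleton hQ)).snoc
    (.resolve_litNeg (l := l) (by simp) (by simp))

theorem exists_isDerivation_forall_mem {m : ℕ} (T : Finset (Clause V))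
    (hT : ∀ C ∈ T, ∃ M, IsDerivation F M ∧ M.length ≤ m ∧ C ∈ M) :
    ∃ L, IsDerivation F L ∧ L.length ≤ m * T.card ∧ ∀ C ∈ T, C ∈ L := by
  induction T using Finset.induction_on with
  | empty => exact ⟨[], .nil, by simp, by simp⟩
  | insert C T hCT ih =>
    rw [Finset.forall_mem_insert] at hT
    obtain ⟨M, hM, hMlen, hCM⟩ := hT.1
    obtain ⟨L, hL, hLlen, hTL⟩ := ih hT.2
    refine ⟨L ++ M, hL.append hM, ?_, ?_⟩
    · rw [List.length_append, Finset.card_insert_of_notMem hCT, Nat.mul_succ]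
      exact Nat.add_le_add hLlen hMlen
    · rw [Finset.forall_mem_insert]
      exact ⟨List.mem_append_right L hCM, fun D hD => List.mem_append_left M (hTL D hD)⟩

theorem isDerivation_iff_forall_getElem :
    IsDerivation F L ↔ ∀ i (hi : i < L.length), IsResStep F (L.take i) L[i] := by
  refine ⟨fun h => ?_, fun h => ?_⟩
  · induction h with
    | nil => simp
    | @snoc L C _ hC ih =>
      intro i hi
      have hle : i ≤ L.length := by simpa using hi
      obtain hlt | rfl := hle.lt_or_eq
      · rw [List.take_append_of_le_length hlt.le, List.getElem_append_left hlt]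
        exact ih i hlt
      · simpa using hC
  · induction L using List.reverseRecOn with
    | nil => exact .nil
    | append_singleton L C ih =>
      refine .snoc (ih fun i hi => ?_) (by simpa using h L.length (by simp))
      have hstep := h i (by simpa using hi.trans (Nat.lt_succ_self _))
      rwa [List.take_append_of_le_length hi.le, List.getElem_append_left hi] at hstep

theorem ResRefutation.isDerivation (π : ResRefutation F) : IsDerivation F π.seq := by
  refine isDerivation_iff_forall_getElem.2 fun i hi => ?_
  have hmem (j : ℕ) (hj : j < i) : π.seq[j] ∈ π.seq.take i :=
    List.mem_take_iff_getElem.2 ⟨j, by omega, rfl⟩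
  rcases π.valid i hi with hF | ⟨j, l, hj, hl, x, P, Q, hP, hQ, hPQ⟩ | ⟨j, hj, l, hD⟩
  · exact .ax hF
  · exact hPQ ▸ .resolve x (hP ▸ hmem j hj) (hQ ▸ hmem l hl)
  · exact hD ▸ .weaken l (hmem j hj)

/-- A nonempty derivation whose last line is the empty clause, as a refutation. -/
def ResRefutation.ofIsDerivation (hL : IsDerivation F L) (hne : L ≠ [])
    (hlast : L.getLast hne = ∅) : ResRefutation F where
  seq := L
  ne := hne
  lastEmpty := hlast
  valid i hi := by
    have hidx {D : Clause V} (hD : D ∈ L.take i) : ∃ j, ∃ hj : j < i, L[j] = D := by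
      obtain ⟨j, hj, rfl⟩ := List.mem_take_iff_getElem.1 hD
      exact ⟨j, by omega, rfl⟩
    have hstep := isDerivation_iff_forall_getElem.1 hL i hi
    generalize L[i] = C at hstep
    cases hstep with
    | ax hC => exact .inl hC
    | @resolve x P Q hP hQ =>
      obtain ⟨j, hj, hjP⟩ := hidx hP
      obtain ⟨l, hl, hlQ⟩ := hidx hQ
      exact .inr (.inl ⟨j, l, hj, hl, x, P, Q, hjP, hlQ, rfl⟩)
    | weaken l hD =>
      obtain ⟨j, hj, rfl⟩ := hidx hD
      exact .inr (.inr ⟨j, hj, l, rfl⟩)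

variable {σ : V × Bool → W × Bool} {L' : List (Clause W)}

theorem IsResStep.image {C : Clause V} (hσ : Function.Semiconj σ litNeg litNeg)
    (hF : ∀ C ∈ F, C.Nonempty) (hFL' : ∀ C ∈ F, C.image σ ∈ L') (h : IsResStep F L C) :
    IsResStep G (L' ++ L.map (Finset.image σ)) (C.image σ) := by
  have hmem {D : Clause V} (hD : D ∈ L) : D.image σ ∈ L' ++ L.map (Finset.image σ) :=
    List.mem_append_right L' (List.mem_map_of_mem hD)
  cases h with
  | ax hC => exact .of_mem_of_nonempty (List.mem_append_left _ (hFL' C hC)) ((hF C hC).image σ)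
  | resolve x hP hQ =>
    rw [Finset.image_union]
    refine .resolve_litNeg (l := σ (x, true)) ?_ ?_
    · rw [← Finset.image_insert]
      exact hmem hP
    · rw [← hσ, ← Finset.image_insert]
      exact hmem hQ
  | weaken l hD =>
    rw [Finset.image_insert]
    exact .weaken (σ l) (hmem hD)

theorem IsDerivation.append_map_image (hσ : Function.Semiconj σ litNeg litNeg)
    (hF : ∀ C ∈ F, C.Nonempty) (hL' : IsDerivation G L') (hFL' : ∀ C ∈ F, C.image σ ∈ L')
    (hL : IsDerivation F L) : IsDerivation G (L' ++ L.map (Finset.image σ)) := by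
  induction hL with
  | nil => simpa using hL'
  | snoc _ hC ih =>
    rw [List.map_append, ← List.append_assoc]
    exact ih.snoc (hC.image hσ hF hFL')

theorem ResRefutation.exists_size_le_of_substitution {m : ℕ}
    (hσ : Function.Semiconj σ litNeg litNeg) (hfin : F.Finite) (hF : ∀ C ∈ F, C.Nonempty)
    (hder : ∀ C ∈ F, ∃ M, IsDerivation G M ∧ M.length ≤ m ∧ C.image σ ∈ M)
    (π : ResRefutation F) : ∃ π' : ResRefutation G, π'.size ≤ π.size + m * F.ncard := by
  obtain ⟨L', hL', hlen, hmem⟩ :=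
    exists_isDerivation_forall_mem (hfin.toFinset.image (Finset.image σ)) (by simpa using hder)
  have hπ : IsDerivation G (L' ++ π.seq.map (Finset.image σ)) :=
    hL'.append_map_image hσ hF (by simpa using hmem) π.isDerivation
  have hne : π.seq.map (Finset.image σ) ≠ [] := by simpa using π.ne
  refine ⟨.ofIsDerivation hπ (List.append_ne_nil_of_right_ne_nil L' hne) ?_, ?_⟩
  · rw [List.getLast_append_of_ne_nil _ hne, List.getLast_map, π.lastEmpty, Finset.image_empty]
  · calc (L' ++ π.seq.map (Finset.image σ)).length
        = π.size + L'.length := by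
          rw [List.length_append, List.length_map, add_comm, ResRefutation.size]
      _ ≤ π.size + m * (hfin.toFinset.image (Finset.image σ)).card := by gcongr
      _ ≤ π.size + m * F.ncard := by
          rw [Set.ncard_eq_toFinset_card F hfin]
          gcongr
          exact Finset.card_image_le

end Resolution

/-- A clause with literals of both signs. These are the clauses that become tautologies when all
variables are identified, as `x_i ↦ ¬c_2` does. -/
def IsMixed {V : Type} (C : Clause V) : Prop :=
  ∀ b : Bool, ∃ x, (x, b) ∈ C

theorem IsMixed.nonempty {V : Type} {C : Clause V} (hC : IsMixed C) : C.Nonempty :=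
  let ⟨x, hx⟩ := hC true
  ⟨(x, true), hx⟩

theorem isMixed_of_mem_Psi {n : ℕ} {D : Clause ℕ} (hD : D ∈ Psi n) : IsMixed D := by
  obtain ⟨i, -, rfl | rfl⟩ := hD <;> simp [IsMixed]

theorem finite_Psi (n : ℕ) : (Psi n).Finite := by
  refine (((Set.finite_Iio n).image fun i => {(2 * i, true), (2 * i + 1, false)}).union
    ((Set.finite_Iio n).image fun i => {(2 * i + 1, true), (2 * i, false)})).subset ?_
  rintro D ⟨i, hi, rfl | rfl⟩
  · exact .inl ⟨i, Set.mem_Iio.2 (by omega), rfl⟩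
  · exact .inr ⟨i, Set.mem_Iio.2 (by omega), rfl⟩

section Embedded

variable {Φ : Set (Clause ℕ)} {n k : ℕ}

theorem finite_EmbeddedCNF (hΦ : Φ.Finite) (n k : ℕ) : (EmbeddedCNF Φ n k).Finite := by
  have hpigeon (g : ℕ → Clause EV) : {C | ∃ i, i < n ∧ C = g i}.Finite :=
    ((Set.finite_Iio n).image g).subset fun _ ⟨i, hi, h⟩ => ⟨i, hi, h.symm⟩
  have hhole (m : ℕ) (g : ℕ → ℕ → ℕ → Clause EV) :
      {C | ∃ i l j, i < n ∧ l < n ∧ i ≠ l ∧ j < m ∧ C = g i l j}.Finite :=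
    (((Set.finite_Iio n).prod ((Set.finite_Iio n).prod (Set.finite_Iio m))).image
      fun p => g p.1 p.2.1 p.2.2).subset
      fun _ ⟨i, l, j, hi, hl, _, hj, h⟩ => ⟨(i, l, j), ⟨hi, hl, hj⟩, h.symm⟩
  have hbase (g : Clause ℕ → Clause EV) : {C | ∃ D ∈ Φ, C = g D}.Finite :=
    (hΦ.image g).subset fun _ ⟨D, hD, h⟩ => ⟨D, hD, h.symm⟩
  exact ((((hbase _).union (hpigeon _)).union (hhole _ _)).union (hpigeon _)).union (hhole _ _)

theorem nonempty_of_mem_EmbeddedCNF (hΦ : ∀ D ∈ Φ, D.Nonempty) {C : Clause EV}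
    (hC : C ∈ EmbeddedCNF Φ n k) : C.Nonempty := by
  obtain (((⟨D, hD, rfl⟩ | ⟨i, -, rfl⟩) | ⟨i, l, j, -, -, -, -, rfl⟩) | ⟨i, -, rfl⟩) |
    ⟨i, l, j, -, -, -, -, rfl⟩ := hC
  · exact (hΦ D hD).image _
  all_goals exact Finset.insert_nonempty _ _

theorem subLit_semiconj_litNeg : Function.Semiconj subLit litNeg litNeg := by
  rintro ⟨_ | _ | _, _⟩ <;> rfl

theorem subClause_insert (l : EV × Bool) (C : Clause EV) :
    subClause (insert l C) = insert (subLit l) (subClause C) :=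
  Finset.image_insert subLit l C

theorem subClause_image_xvar_of_isMixed {D : Clause ℕ} (hD : IsMixed D) :
    subClause (D.image fun l => (xvar l.1, l.2)) = {(c2var, true), (c2var, false)} := by
  obtain ⟨x, hx⟩ := hD true
  obtain ⟨y, hy⟩ := hD false
  rw [subClause, Finset.image_image]
  refine Finset.Subset.antisymm (Finset.image_subset_iff.2 ?_) ?_
  · rintro ⟨z, _ | _⟩ - <;> simp [subLit, xvar]
  · rw [Finset.insert_subset_iff, Finset.singleton_subset_iff]
    exact ⟨Finset.mem_image.2 ⟨_, hy, rfl⟩, Finset.mem_image.2 ⟨_, hx, rfl⟩⟩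

theorem c1_or_c2_mem_Pnk (n k : ℕ) : {(c1var, true), (c2var, true)} ∈ Pnk n k := by
  simp [Pnk]

theorem not_c1_or_not_c2_mem_Pnk (n k : ℕ) : {(c1var, false), (c2var, false)} ∈ Pnk n k := by
  simp [Pnk]

theorem subClause_mem_Pnk_or_eq_resolvent (hΦ : ∀ D ∈ Φ, IsMixed D) {C : Clause EV}
    (hC : C ∈ EmbeddedCNF Φ n k) :
    subClause C ∈ Pnk n k ∨
      ∃ E, insert (c1var, false) E ∈ Pnk n k ∧ subClause C = {(c2var, true)} ∪ E := by
  obtain (((⟨D, hD, rfl⟩ | ⟨i, hi, rfl⟩) | ⟨i, l, j, hi, hl, hil, hj, rfl⟩) | ⟨i, hi, rfl⟩) |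
    ⟨i, l, j, hi, hl, hil, hj, rfl⟩ := hC
  · exact .inr ⟨_, not_c1_or_not_c2_mem_Pnk n k, subClause_image_xvar_of_isMixed (hΦ D hD)⟩
  · refine .inr ⟨_, .inl (.inl (.inr ⟨i, hi, rfl⟩)), ?_⟩
    rw [subClause_insert, subClause, Finset.image_image]
    rfl
  · refine .inr ⟨_, .inl (.inl (.inl (.inr ⟨i, l, j, hi, hl, hil, hj, rfl⟩))), ?_⟩
    rw [subClause_insert, subClause_insert]
    rfl
  · refine .inl (.inr ⟨i, hi, ?_⟩)
    rw [subClause_insert, subClause, Finset.image_image]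
    rfl
  · refine .inl (.inl (.inr ⟨i, l, j, hi, hl, hil, hj, ?_⟩))
    rw [subClause_insert, subClause_insert]
    rfl

theorem exists_isDerivation_subClause (hΦ : ∀ D ∈ Φ, IsMixed D) {C : Clause EV}
    (hC : C ∈ EmbeddedCNF Φ n k) :
    ∃ M, IsDerivation (Pnk n k) M ∧ M.length ≤ 3 ∧ subClause C ∈ M := by
  obtain h | ⟨E, hE, h⟩ := subClause_mem_Pnk_or_eq_resolvent hΦ hC
  · exact ⟨_, isDerivation_singleton h, by simp, by simp⟩
  · exact ⟨_, isDerivation_resolvent (c1_or_c2_mem_Pnk n k) hE, le_rfl, by simp [h]⟩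

theorem substituted_embedded_psi_clauses_derivable_general (hfin : Φ.Finite)
    (hΦ : ∀ D ∈ Φ, IsMixed D) (n k : ℕ) :
    (∀ C ∈ EmbeddedCNF Φ n k,
      subClause C ∈ Pnk n k ∨
      ∃ D ∈ Pnk n k, ∃ E : Clause PV, D = insert (c1var, false) E ∧
        E ∪ ({(c2var, true)} : Clause PV) ⊆ subClause C) ∧
    ∀ π : ResRefutation (EmbeddedCNF Φ n k), ∃ π' : ResRefutation (Pnk n k),
      π'.size ≤ π.size + 3 * (EmbeddedCNF Φ n k).ncard := by
  refine ⟨fun C hC => ?_, fun π => ?_⟩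
  · refine (subClause_mem_Pnk_or_eq_resolvent hΦ hC).imp_right ?_
    rintro ⟨E, hE, h⟩
    exact ⟨_, hE, E, rfl, by rw [h, Finset.union_comm]⟩
  · exact π.exists_size_le_of_substitution subLit_semiconj_litNeg (finite_EmbeddedCNF hfin n k)
      (fun C hC => nonempty_of_mem_EmbeddedCNF (fun D hD => (hΦ D hD).nonempty) hC)
      (fun C hC => exists_isDerivation_subClause hΦ hC)

end Embedded

/-- every clause of `Ψ'_{n,k}`, after the substitution `x_i ↦ ¬c_2`,
`r_{x_i,j} ↦ p_{i,j}`, `s_{x_i,j} ↦ q_{i,j}`, either is a clause of `P_{n,k}` or is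
derivable from clauses of `P_{n,k}` by a single resolution step with the clause
`c_1 ∨ c_2` (possibly followed by weakenings). Consequently, there is a constant `c`
such that if `Ψ'_{n,k}` has a Resolution refutation of size `S`, then `P_{n,k}` has a
Resolution refutation of size at most `S` plus `c` times the number of clauses of
`Ψ'_{n,k}`. -/
theorem substituted_embedded_psi_clauses_derivable :
    (∀ (n k : ℕ), Odd k → Even n → k ≤ n →
      ∀ C ∈ EmbeddedCNF (Psi n) n k,
        subClause C ∈ Pnk n k ∨
        ∃ D ∈ Pnk n k, ∃ E : Clause PV, D = insert (c1var, false) E ∧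
          E ∪ ({(c2var, true)} : Clause PV) ⊆ subClause C) ∧
    (∃ c : ℕ, ∀ (n k : ℕ), Odd k → Even n → k ≤ n →
      ∀ π : ResRefutation (EmbeddedCNF (Psi n) n k),
        ∃ π' : ResRefutation (Pnk n k),
          π'.size ≤ π.size + c * (EmbeddedCNF (Psi n) n k).ncard) :=
  have general (n k : ℕ) := substituted_embedded_psi_clauses_derivable_general (finite_Psi n)
    (fun _ hD => isMixed_of_mem_Psi hD) n k
  ⟨fun n k _ _ _ => (general n k).1, 3, fun n k _ _ _ => (general n k).2⟩
end
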